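/- The tangle space of G is homeomorphic to the space obtained from the Stone-Čech remainder of its 1-complex by collapsing each connected component to a single point: there is a homeomorphism Θ ≃ₜ ConnectedComponents ↥G*, where ↥G* is the remainder G* with its subspace topology and ConnectedComponents denotes the quotient of a space by its connected components. -/

import Mathlib

open SimpleGraph

variable {V : Type*} (G : SimpleGraph V)

/-- The darts of `G` carry the discrete topology. -/
instance : TopologicalSpace G.Dart := ⊥

instance : DiscreteTopology G.Dart := ⟨rfl⟩

/-- The generating relation for the 1-complex: `(d, t) ∼ (d.symm, 1 − t)`, and
`(d, 0) ∼ (d', 0)` whenever `d` and `d'` have the same initial vertex. -/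
def oneComplexRel (p q : G.Dart × unitInterval) : Prop :=
  (q.1 = p.1.symm ∧ q.2 = unitInterval.symm p.2) ∨
    (p.2 = 0 ∧ q.2 = 0 ∧ p.1.fst = q.1.fst)

/-- The equivalence relation generated by `oneComplexRel`. -/
def oneComplexSetoid : Setoid (G.Dart × unitInterval) :=
  Relation.EqvGen.setoid (oneComplexRel G)

/-- The 1-complex `|G|` of the graph `G`. -/
abbrev OneComplex : Type _ :=
  Quotient (oneComplexSetoid G)

/-- The set of vertex points of the 1-complex. -/
def vertexPoints : Set (OneComplex G) :=
  {x | ∃ d : G.Dart, x = Quotient.mk (oneComplexSetoid G) (d, (0 : unitInterval))}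

/-- The set of inner edge points of the 1-complex. -/
def innerEdgePoints : Set (OneComplex G) :=
  {x | ∃ (d : G.Dart) (t : unitInterval), 0 < (t : ℝ) ∧ (t : ℝ) < 1 ∧
    x = Quotient.mk (oneComplexSetoid G) (d, t)}

/-- The Stone-Čech remainder `G*` of the 1-complex `|G|`. -/
def stoneCechRemainder : Set (StoneCech (OneComplex G)) :=
  (Set.range (stoneCechUnit : OneComplex G → StoneCech (OneComplex G)))ᶜ

/-- The tangle space `Θ` of `G`: the inverse limit of the ultrafilter spaces
`Ultrafilter (G.ComponentCompl X)` over the finite vertex sets `X`. -/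
def TangleSpace : Type _ :=
  {U : ∀ X : Finset V, Ultrafilter (G.ComponentCompl (X : Set V)) //
    ∀ (X Y : Finset V) (h : X ⊆ Y),
      (U Y).map (ComponentCompl.hom (Finset.coe_subset.mpr h)) = U X}

instance : TopologicalSpace (TangleSpace G) :=
  instTopologicalSpaceSubtype


namespace TangleProof

open Set Filter Topology

section Generic

lemma ultra_split {Y : Type*} [TopologicalSpace Y] {κ : Type*} (w : Ultrafilter κ) (S : κ → Set Y) (hS : ∀ i, IsPreconnected (S i))
    (D : Set κ) (hD : D ∈ w) (a b : Set Y) (ha : IsOpen a) (hb : IsOpen b) (hab : Disjoint a b)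
    (hc : (⋃ i ∈ D, S i) ⊆ a ∪ b) :
    ∃ D' ∈ w, (⋃ i ∈ D', S i) ⊆ a ∨ (⋃ i ∈ D', S i) ⊆ b := by
  by_cases h : {i | S i ⊆ a} ∈ w
  · exact ⟨_, h, Or.inl (iUnion₂_subset fun i hi => hi)⟩
  · rw [← Ultrafilter.compl_mem_iff_notMem] at h
    refine ⟨_, inter_mem hD h, Or.inr (iUnion₂_subset fun i hi => ?_)⟩
    have := isPreconnected_iff_subset_of_disjoint.1 (hS i) a b ha hb
      ((subset_biUnion_of_mem (u := S) hi.1).trans hc) (by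
        rw [hab.inter_eq, inter_empty])
    exact this.resolve_left hi.2


variable {Y : Type*} [TopologicalSpace Y] [CompactSpace Y] [T2Space Y]

lemma precon_iInter {ι : Type*} [Nonempty ι] (A : ι → Set Y)
    (dir : ∀ i j, ∃ k, A k ⊆ A i ∧ A k ⊆ A j)
    (H : ∀ i, ∀ a b : Set Y, IsOpen a → IsOpen b → Disjoint a b → A i ⊆ a ∪ b →
      ∃ k, A k ⊆ a ∨ A k ⊆ b) :
    IsPreconnected (⋂ i, closure (A i)) := by
  have hcl : IsClosed (⋂ i, closure (A i)) := isClosed_iInter fun _ => isClosed_closure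
  rw [isPreconnected_iff_subset_of_fully_disjoint_closed hcl]
  intro u v hu hv huv hd
  obtain ⟨a, b, ha, hb, hua, hvb, hab⟩ := normal_separation hu hv hd
  obtain ⟨i, hi⟩ := exists_subset_nhds_of_compactSpace (V := fun i => closure (A i))
    (fun i j => by
      obtain ⟨k, h1, h2⟩ := dir i j
      exact ⟨k, closure_mono h1, closure_mono h2⟩)
    (fun i => isClosed_closure) (U := a ∪ b)
    (fun x hx => (ha.union hb).mem_nhds (union_subset_union hua hvb (huv hx)))
  obtain ⟨k, hk | hk⟩ := H i a b ha hb hab (subset_closure.trans hi)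
  · left
    intro x hx
    rcases huv hx with h | h
    · exact h
    · exfalso
      have h1 : x ∈ closure a := closure_mono hk (mem_iInter.1 hx k)
      exact Set.disjoint_left.1 (hab.closure_left hb) h1 (hvb h)
  · right
    intro x hx
    rcases huv hx with h | h
    · exfalso
      have h1 : x ∈ closure b := closure_mono hk (mem_iInter.1 hx k)
      exact Set.disjoint_left.1 (hab.closure_right ha) (hua h) h1
    · exact h

lemma precon_ultra {κ : Type*} (w : Ultrafilter κ) (S : κ → Set Y)
    (hS : ∀ i, IsPreconnected (S i)) :
    IsPreconnected (⋂ D : {D : Set κ // D ∈ w}, closure (⋃ i ∈ D.1, S i)) := by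
  have : Nonempty {D : Set κ // D ∈ w} := ⟨⟨univ, univ_mem⟩⟩
  apply precon_iInter
  · rintro ⟨D, hD⟩ ⟨D', hD'⟩
    exact ⟨⟨D ∩ D', inter_mem hD hD'⟩, biUnion_subset_biUnion_left inter_subset_left,
      biUnion_subset_biUnion_left inter_subset_right⟩
  · rintro ⟨D, hD⟩ a b ha hb hab hc
    obtain ⟨D', h, h'⟩ := ultra_split w S hS D hD a b ha hb hab hc
    exact ⟨⟨D', h⟩, h'⟩

end Generic

section SC

variable {K : Type*} [TopologicalSpace K]

lemma sep_closure (f : K → ℝ) (hf : Continuous f) (A : Set K) (hA : ∀ y ∈ A, f y = 1) (y : K)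
    (hy : f y < 1) : stoneCechUnit y ∉ closure (stoneCechUnit '' A : Set (StoneCech K)) := by
  have hg : Continuous fun y => Set.projIcc (0:ℝ) 1 zero_le_one (f y) :=
    continuous_projIcc.comp hf
  intro h
  have hcl : IsClosed (stoneCechExtend hg ⁻¹' {1}) :=
    isClosed_singleton.preimage (continuous_stoneCechExtend hg)
  have hsub : (stoneCechUnit '' A : Set (StoneCech K)) ⊆ stoneCechExtend hg ⁻¹' {1} := by
    rintro _ ⟨z, hz, rfl⟩
    simp only [mem_preimage, stoneCechExtend_stoneCechUnit, hA z hz, mem_singleton_iff]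
    exact Set.projIcc_right zero_le_one
  have := closure_minimal hsub hcl h
  simp only [mem_preimage, stoneCechExtend_stoneCechUnit, mem_singleton_iff] at this
  have h2 := congrArg Subtype.val this
  simp only [Set.coe_projIcc] at h2
  have h3 : max (0:ℝ) (min 1 (f y)) < 1 := by
    rw [min_eq_right hy.le]; exact max_lt one_pos hy
  exact h3.ne h2

/-- trace filter -/
def tr (p : StoneCech K) : Filter K := comap stoneCechUnit (𝓝 p)

instance (p : StoneCech K) : (tr p).NeBot :=
  comap_neBot fun t ht => by
    obtain ⟨_, h1, y, rfl⟩ := mem_closure_iff_nhds.1 (denseRange_stoneCechUnit p) t ht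
    exact ⟨y, h1⟩

lemma exists_h (S : Set K) (hS : IsCompact S) (p : StoneCech K)
    (hp : p ∉ range (stoneCechUnit : K → StoneCech K)) :
    ∃ h : StoneCech K → ℝ, Continuous h ∧ (∀ y ∈ S, h (stoneCechUnit y) = 0) ∧ h p = 1 ∧
      ∀ z, h z ∈ Icc (0:ℝ) 1 := by
  have hS' : IsClosed (stoneCechUnit '' S : Set (StoneCech K)) :=
    (hS.image continuous_stoneCechUnit).isClosed
  obtain ⟨h, h0, h1, h2⟩ := exists_continuous_zero_one_of_isClosed hS' (isClosed_singleton (x := p))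
    (by
      rw [Set.disjoint_singleton_right]
      rintro ⟨y, -, rfl⟩
      exact hp ⟨y, rfl⟩)
  exact ⟨h, h.continuous, fun y hy => h0 ⟨y, hy, rfl⟩, h1 rfl, h2⟩

lemma compl_mem_tr (S : Set K) (hS : IsCompact S) (p : StoneCech K)
    (hp : p ∉ range (stoneCechUnit : K → StoneCech K)) : Sᶜ ∈ tr p := by
  have hS' : IsClosed (stoneCechUnit '' S : Set (StoneCech K)) :=
    (hS.image continuous_stoneCechUnit).isClosed
  refine ⟨_, hS'.isOpen_compl.mem_nhds (x := p) ?_, ?_⟩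
  · rintro ⟨y, -, rfl⟩
    exact hp ⟨y, rfl⟩
  · intro y hy hyS
    exact hy ⟨y, hyS, rfl⟩

lemma dichotomy (S A B : Set K) (hS : IsCompact S) (hA : IsOpen A) (hB : IsOpen B)
    (hAB : Disjoint A B) (hcov : ∀ y, y ∈ A ∨ y ∈ B ∨ y ∈ S) (p : StoneCech K)
    (hp : p ∉ range (stoneCechUnit : K → StoneCech K)) : A ∈ tr p ∨ B ∈ tr p := by
  classical
  obtain ⟨h, hc, h0, h1, h2⟩ := exists_h S hS p hp
  let g : K → ℝ := fun y => if y ∈ A then h (stoneCechUnit y) else - h (stoneCechUnit y)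
  have hcu : Continuous fun y : K => h (stoneCechUnit y) := hc.comp continuous_stoneCechUnit
  have habs : ∀ y, |g y| = h (stoneCechUnit y) := by
    intro y
    simp only [g]
    split_ifs
    · exact abs_of_nonneg (h2 _).1
    · rw [abs_neg]; exact abs_of_nonneg (h2 _).1
  have hg : Continuous g := by
    rw [continuous_iff_continuousAt]
    intro y
    rcases hcov y with hy | hy | hy
    · refine hcu.continuousAt.congr ?_
      filter_upwards [hA.mem_nhds hy] with z hz
      simp [g, hz]
    · refine hcu.neg.continuousAt.congr ?_
      filter_upwards [hB.mem_nhds hy] with z hz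
      have : z ∉ A := Set.disjoint_right.1 hAB hz
      simp [g, this]
    · have hy0 := h0 y hy
      have : g y = 0 := by rw [← abs_eq_zero, habs, hy0]
      unfold ContinuousAt
      rw [this]
      apply squeeze_zero_norm (a := fun y => h (stoneCechUnit y))
      · intro z; rw [Real.norm_eq_abs, habs]
      · have := hcu.tendsto y
        rwa [hy0] at this
  have hg' : Continuous fun y => Set.projIcc (-1:ℝ) 1 (by norm_num) (g y) :=
    continuous_projIcc.comp hg
  have hgI : ∀ y, g y ∈ Icc (-1:ℝ) 1 := fun y => by
    rw [mem_Icc, ← abs_le, habs]; exact (h2 _).2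
  let e : StoneCech K → ℝ := fun z => ((stoneCechExtend hg' z : Icc (-1:ℝ) 1) : ℝ)
  have he : Continuous e := continuous_subtype_val.comp (continuous_stoneCechExtend hg')
  have heu : ∀ y, e (stoneCechUnit y) = g y := by
    intro y
    simp only [e, stoneCechExtend_stoneCechUnit]
    rw [Set.projIcc_of_mem _ (hgI y)]
  have habs' : (fun z => |e z|) = h := by
    apply denseRange_stoneCechUnit.equalizer he.abs hc
    funext y
    simp only [Function.comp, heu, habs]
  have hp1 : |e p| = 1 := by rw [← h1, ← habs']
  rcases (abs_eq zero_le_one).1 hp1 with hh | hh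
  · left
    refine ⟨{z | 0 < e z}, (isOpen_lt continuous_const he).mem_nhds (by simp [hh]), ?_⟩
    intro y hy
    by_contra hn
    have hy' : 0 < e (stoneCechUnit y) := hy
    rw [heu] at hy'
    simp only [g, hn, if_false] at hy'
    have := (h2 (stoneCechUnit y)).1
    linarith
  · right
    refine ⟨{z | e z < 0}, (isOpen_lt he continuous_const).mem_nhds (by simp [hh]), ?_⟩
    intro y hy
    have hy' : e (stoneCechUnit y) < 0 := hy
    rw [heu] at hy'
    have hab := habs y
    rcases hcov y with h' | h' | h'
    · exfalso
      simp only [g, h', if_true] at hy'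
      have := (h2 (stoneCechUnit y)).1
      linarith
    · exact h'
    · exfalso
      rw [h0 y h'] at hab
      rw [abs_eq_zero.1 hab] at hy'
      exact lt_irrefl _ hy'

end SC

section Graph

/-- point of the complex -/
def pt (d : G.Dart) (t : unitInterval) : OneComplex G := Quotient.mk (oneComplexSetoid G) (d, t)

variable {G}

lemma pt_symm (d : G.Dart) (t : unitInterval) : pt G d t = pt G d.symm (unitInterval.symm t) :=
  Quotient.sound (Relation.EqvGen.rel _ _ (Or.inl ⟨rfl, rfl⟩))

lemma pt_zero (d d' : G.Dart) (h : d.fst = d'.fst) : pt G d 0 = pt G d' 0 :=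
  Quotient.sound (Relation.EqvGen.rel _ _ (Or.inr ⟨rfl, rfl, h⟩))

lemma exists_pt (y : OneComplex G) : ∃ d t, y = pt G d t := by
  induction y using Quotient.inductionOn with
  | h p => exact ⟨p.1, p.2, rfl⟩

lemma continuous_mk : Continuous (fun p : G.Dart × unitInterval => pt G p.1 p.2) :=
  continuous_quotient_mk'

lemma continuous_pt (d : G.Dart) : Continuous (pt G d) :=
  continuous_mk.comp (Continuous.prodMk_right d)

/-- lift of functions -/
def liftC {α : Type*} (f : G.Dart × unitInterval → α)
    (h1 : ∀ d t, f (d, t) = f (d.symm, unitInterval.symm t))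
    (h2 : ∀ d d' : G.Dart, d.fst = d'.fst → f (d, 0) = f (d', 0)) : OneComplex G → α :=
  Quotient.lift f (by
    intro a b hab
    have hab' : Relation.EqvGen (oneComplexRel G) a b := hab
    induction hab' with
    | rel x y h =>
      obtain ⟨d, t⟩ := x
      obtain ⟨d', t'⟩ := y
      rcases h with ⟨h, h'⟩ | ⟨h, h', h''⟩
      · simp only at h h'
        subst h h'
        exact h1 _ _
      · simp only at h h' h''
        subst h h'
        exact h2 _ _ h''
    | refl x => rfl
    | symm x y _ ih => exact (ih (by assumption)).symm
    | trans x y z hxy hyz ih1 ih2 => exact (ih1 hxy).trans (ih2 hyz))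

lemma liftC_pt {α : Type*} (f : G.Dart × unitInterval → α) (h1) (h2) (d : G.Dart)
    (t : unitInterval) : liftC f h1 h2 (pt G d t) = f (d, t) := rfl

lemma continuous_liftC {α : Type*} [TopologicalSpace α] (f : G.Dart × unitInterval → α) (h1) (h2)
    (hf : Continuous f) : Continuous (liftC f h1 h2) :=
  hf.quotient_lift _

lemma dart_ne (d : G.Dart) : d.fst ≠ d.snd := d.adj.ne

open Classical in
/-- raw bump function -/
noncomputable def bump0 (b : V) (ε : G.Dart → ℝ) (p : G.Dart × unitInterval) : ℝ :=
  if p.1.fst = b then min 1 ((p.2 : ℝ) / ε p.1)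
  else if p.1.snd = b then min 1 ((1 - (p.2 : ℝ)) / ε p.1.symm) else 1

lemma exists_bump (b : V) (ε : G.Dart → ℝ) (hε : ∀ d, 0 < ε d) (hε1 : ∀ d, ε d ≤ 1) :
    ∃ f : OneComplex G → ℝ, Continuous f ∧ ∀ d t, f (pt G d t) = bump0 b ε (d, t) := by
  refine ⟨liftC (bump0 b ε) ?_ ?_, continuous_liftC _ _ _ ?_, fun d t => rfl⟩
  · intro d t
    unfold bump0
    have := dart_ne d
    simp only [Dart.symm_toProd, Prod.fst_swap, Prod.snd_swap, unitInterval.coe_symm_eq,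
      Dart.symm_symm, sub_sub_cancel]
    by_cases h : d.fst = b
    · have h2 : d.snd ≠ b := fun h' => this (h.trans h'.symm)
      simp [h, h2]
    · have h3 : d.symm.snd ≠ b := h
      by_cases h2 : d.snd = b
      · have h4 : d.symm.fst = b := h2
        rw [if_neg h, if_pos h2, if_pos h4]
      · have h4 : d.symm.fst ≠ b := h2
        rw [if_neg h, if_neg h2, if_neg h4, if_neg h3]
  · intro d d' h
    unfold bump0
    by_cases h1 : d'.fst = b
    · simp [h1, h.trans h1]
    · have key : ∀ d : G.Dart, min 1 ((1 - ((0 : unitInterval) : ℝ)) / ε d.symm) = 1 := by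
        intro d
        rw [min_eq_left]
        rw [le_div_iff₀ (hε _)]
        simpa using hε1 _
      have h1' : ¬ d.fst = b := fun h2 => h1 (h.symm.trans h2)
      simp only [h1, h1', if_false, key, ite_self]
  · rw [continuous_prod_of_discrete_left]
    intro d
    unfold bump0
    simp only
    split_ifs
    · fun_prop
    · fun_prop
    · fun_prop

/-- bump with constant one -/
lemma exists_star (b : V) :
    ∃ f : OneComplex G → ℝ, Continuous f ∧ (∀ d t, d.fst ≠ b → d.snd ≠ b → f (pt G d t) = 1) ∧
      (∀ d, d.fst ≠ b → f (pt G d 0) = 1) ∧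
      (∀ d (t : unitInterval), d.fst = b → f (pt G d t) = t) := by
  obtain ⟨f, hf, h⟩ := exists_bump (G := G) b (fun _ => 1) (fun _ => one_pos) (fun _ => le_rfl)
  refine ⟨f, hf, ?_, ?_, ?_⟩
  · intro d t h1 h2
    simp [h, bump0, h1, h2]
  · intro d h1
    simp [h, bump0, h1]
  · intro d t h1
    simp [h, bump0, h1, t.2.2]

/-- open star around a set of vertices -/
def openStar (M : Set V) : Set (OneComplex G) :=
  {y | liftC (fun p : G.Dart × unitInterval =>
      (p.1.fst ∈ M ∧ p.2 < 1) ∨ (p.1.snd ∈ M ∧ 0 < p.2))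
    (by
      intro d t
      have h1 : unitInterval.symm t < 1 ↔ 0 < t := by
        rw [← unitInterval.symm_zero, unitInterval.symm_lt_symm]
      have h2 : 0 < unitInterval.symm t ↔ t < 1 := by
        rw [← unitInterval.symm_one, unitInterval.symm_lt_symm]
      simp only [Dart.symm_toProd, Prod.fst_swap, Prod.snd_swap, h1, h2]
      rw [or_comm])
    (by
      intro d d' h
      simp [h]) y}

lemma mem_openStar (M : Set V) (d : G.Dart) (t : unitInterval) :
    pt G d t ∈ openStar M ↔ (d.fst ∈ M ∧ t < 1) ∨ (d.snd ∈ M ∧ 0 < t) := Iff.rfl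

lemma isOpen_openStar (M : Set V) : IsOpen (openStar (G := G) M) := by
  have hq : IsQuotientMap (fun p : G.Dart × unitInterval => pt G p.1 p.2) :=
    isQuotientMap_quotient_mk'
  rw [← hq.isOpen_preimage]
  have : (fun p : G.Dart × unitInterval => pt G p.1 p.2) ⁻¹' openStar M =
      {p | (p.1.fst ∈ M ∧ p.2 < 1) ∨ (p.1.snd ∈ M ∧ 0 < p.2)} := rfl
  rw [this]
  have h1 : IsOpen {p : G.Dart × unitInterval | p.1.fst ∈ M} :=
    (isOpen_discrete {d : G.Dart | d.fst ∈ M}).preimage continuous_fst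
  have h2 : IsOpen {p : G.Dart × unitInterval | p.1.snd ∈ M} :=
    (isOpen_discrete {d : G.Dart | d.snd ∈ M}).preimage continuous_fst
  exact IsOpen.union (h1.and (isOpen_lt continuous_snd continuous_const))
    (h2.and (isOpen_lt continuous_const continuous_snd))

lemma openStar_mono {M N : Set V} (h : M ⊆ N) : openStar (G := G) M ⊆ openStar N := by
  intro y hy
  obtain ⟨d, t, rfl⟩ := exists_pt y
  rw [mem_openStar] at *
  exact hy.imp (And.imp_left (@h _)) (And.imp_left (@h _))

lemma edge_compact (d : G.Dart) : IsCompact (range (pt G d)) :=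
  isCompact_range (continuous_pt d)

lemma compact_compl_openStar (H : ∀ v, ∃ d : G.Dart, d.fst = v) (X : Finset V) :
    IsCompact (openStar (G := G) ((X : Set V)ᶜ))ᶜ := by
  have hfin : {d : G.Dart | d.fst ∈ X ∧ d.snd ∈ X}.Finite := by
    apply Set.Finite.of_finite_image (f := fun d : G.Dart => (d.fst, d.snd))
    · apply (X ×ˢ X).finite_toSet.subset
      rintro _ ⟨d, ⟨h1, h2⟩, rfl⟩
      simp at h1 h2 ⊢
      exact ⟨h1, h2⟩
    · intro d _ d' _ h
      exact Dart.ext _ _ h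
  choose dv hdv using H
  have hc : IsCompact ((⋃ d ∈ {d : G.Dart | d.fst ∈ X ∧ d.snd ∈ X}, range (pt G d)) ∪
      ((fun v => pt G (dv v) 0) '' (X : Set V))) :=
    (hfin.isCompact_biUnion fun d _ => edge_compact d).union
      (X.finite_toSet.image _).isCompact
  refine hc.of_isClosed_subset (isOpen_openStar _).isClosed_compl ?_
  intro y hy
  obtain ⟨d, t, rfl⟩ := exists_pt y
  rw [mem_compl_iff, mem_openStar] at hy
  simp only [mem_compl_iff, Finset.mem_coe, not_or, not_and, not_lt] at hy
  by_cases h1 : d.fst ∈ X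
  · by_cases h2 : d.snd ∈ X
    · left
      exact mem_biUnion (x := d) ⟨h1, h2⟩ ⟨t, rfl⟩
    · right
      have : t = 0 := le_antisymm (hy.2 h2) unitInterval.nonneg'
      subst this
      exact ⟨d.fst, h1, pt_zero _ _ (hdv _)⟩
  · have : t = 1 := le_antisymm unitInterval.le_one' (hy.1 h1)
    subst this
    have h2 : d.snd ∈ X := by
      by_contra h2
      have := hy.2 h2
      exact absurd this (by simp)
    right
    refine ⟨d.snd, h2, ?_⟩
    rw [pt_symm d 1, unitInterval.symm_one]
    exact pt_zero _ _ (hdv _)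

/-- union of a set of components -/
def un {X : Set V} (C : Set (G.ComponentCompl X)) : Set V := {v | ∃ c ∈ C, v ∈ c}

lemma un_mono {X : Set V} {C D : Set (G.ComponentCompl X)} (h : C ⊆ D) : un C ⊆ un D :=
  fun _ ⟨c, hc, hv⟩ => ⟨c, h hc, hv⟩

lemma un_disj {X : Set V} {C : Set (G.ComponentCompl X)} {v : V} (h1 : v ∈ un C)
    (h2 : v ∈ un Cᶜ) : False := by
  obtain ⟨c, hc, hv, e⟩ := h1
  obtain ⟨c', hc', hv', e'⟩ := h2
  exact hc' (e'.symm.trans e ▸ hc)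

lemma un_cover {X : Set V} (C : Set (G.ComponentCompl X)) {v : V} (h : v ∉ X) :
    v ∈ un C ∨ v ∈ un Cᶜ := by
  by_cases h' : G.componentComplMk h ∈ C
  · exact Or.inl ⟨_, h', h, rfl⟩
  · exact Or.inr ⟨_, h', h, rfl⟩

lemma un_univ {X : Set V} : un (univ : Set (G.ComponentCompl X)) = Xᶜ := by
  ext v
  constructor
  · rintro ⟨c, -, hv, -⟩; exact hv
  · intro h; exact ⟨_, trivial, h, rfl⟩

lemma un_inter {X : Set V} {C D : Set (G.ComponentCompl X)} {v w : V} (h1 : v ∈ un C)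
    (h2 : w ∈ un D) (h : v = w ∨ G.Adj v w) : v ∈ un (C ∩ D) ∧ w ∈ un (C ∩ D) := by
  obtain ⟨c, hc, hv, e⟩ := h1
  obtain ⟨c', hc', hw, e'⟩ := h2
  have : c = c' := by
    rw [← e, ← e']
    rcases h with rfl | h
    · rfl
    · exact componentComplMk_eq_of_adj G hv hw h
  subst this
  exact ⟨⟨c, ⟨hc, hc'⟩, hv, e⟩, ⟨c, ⟨hc, hc'⟩, hw, e'⟩⟩

lemma openStar_inter {X : Set V} (C D : Set (G.ComponentCompl X)) :
    openStar (un C) ∩ openStar (un D) ⊆ openStar (G := G) (un (C ∩ D)) := by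
  rintro y ⟨h1, h2⟩
  obtain ⟨d, t, rfl⟩ := exists_pt y
  rw [mem_openStar] at *
  rcases h1 with ⟨h1, ht⟩ | ⟨h1, ht⟩ <;> rcases h2 with ⟨h2, ht'⟩ | ⟨h2, ht'⟩
  · exact Or.inl ⟨(un_inter h1 h2 (Or.inl rfl)).1, ht⟩
  · exact Or.inl ⟨(un_inter h1 h2 (Or.inr d.adj)).1, ht⟩
  · exact Or.inl ⟨(un_inter h1 h2 (Or.inr d.adj.symm)).2, ht'⟩
  · exact Or.inr ⟨(un_inter h1 h2 (Or.inl rfl)).1, ht⟩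

lemma openStar_disj {X : Set V} (C : Set (G.ComponentCompl X)) :
    Disjoint (openStar (G := G) (un C)) (openStar (un Cᶜ)) := by
  rw [Set.disjoint_left]
  intro y h1 h2
  have := openStar_inter C Cᶜ ⟨h1, h2⟩
  obtain ⟨d, t, rfl⟩ := exists_pt y
  rw [mem_openStar] at this
  rcases this with ⟨⟨c, ⟨h, h'⟩, -⟩, -⟩ | ⟨⟨c, ⟨h, h'⟩, -⟩, -⟩ <;> exact h' h

section Phi

variable (H : ∀ v, ∃ d : G.Dart, d.fst = v)

lemma star_dich (H : ∀ v, ∃ d : G.Dart, d.fst = v) (p : stoneCechRemainder G) (X : Finset V)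
    (C : Set (G.ComponentCompl (X : Set V))) :
    openStar (un C) ∈ tr p.1 ∨ openStar (un Cᶜ) ∈ tr p.1 := by
  refine dichotomy _ _ _ (compact_compl_openStar H X) (isOpen_openStar _) (isOpen_openStar _)
    (openStar_disj C) ?_ p.1 p.2
  intro y
  by_cases hy : y ∈ openStar (G := G) ((X : Set V)ᶜ)
  · obtain ⟨d, t, rfl⟩ := exists_pt y
    rw [mem_openStar] at hy
    rw [← or_assoc]
    left
    rw [mem_openStar, mem_openStar]
    rcases hy with ⟨h, ht⟩ | ⟨h, ht⟩
    · exact (un_cover C h).imp (fun h => Or.inl ⟨h, ht⟩) (fun h => Or.inl ⟨h, ht⟩)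
    · exact (un_cover C h).imp (fun h => Or.inr ⟨h, ht⟩) (fun h => Or.inr ⟨h, ht⟩)
  · exact Or.inr (Or.inr hy)

/-- the ultrafilter at X -/
noncomputable def phiU (H : ∀ v, ∃ d : G.Dart, d.fst = v) (p : stoneCechRemainder G) (X : Finset V) :
    Ultrafilter (G.ComponentCompl (X : Set V)) :=
  Ultrafilter.ofComplNotMemIff
    { sets := {C | openStar (un C) ∈ tr p.1}
      univ_sets := by
        have := compl_mem_tr _ (compact_compl_openStar H X) p.1 p.2
        rw [compl_compl] at this
        rw [mem_ofPred_eq, un_univ]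
        exact this
      sets_of_superset := fun {C D} h1 h2 =>
        show openStar (un D) ∈ tr p.1 from mem_of_superset h1 (openStar_mono (un_mono h2))
      inter_sets := fun {C D} h1 h2 =>
        show openStar (un (C ∩ D)) ∈ tr p.1 from
          mem_of_superset (inter_mem h1 h2) (openStar_inter C D) }
    (by
      intro C
      change ¬ (openStar (un Cᶜ) ∈ tr p.1) ↔ openStar (un C) ∈ tr p.1
      constructor
      · intro h; exact (star_dich H p X C).resolve_right h
      · intro h h'
        have := inter_mem h h'
        rw [(openStar_disj C).inter_eq] at this
        exact empty_notMem _ this)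

lemma mem_phiU (p : stoneCechRemainder G) (X : Finset V)
    (C : Set (G.ComponentCompl (X : Set V))) : C ∈ phiU H p X ↔ openStar (un C) ∈ tr p.1 := Iff.rfl

lemma un_hom {X Y : Set V} (h : X ⊆ Y) (C : Set (G.ComponentCompl X)) :
    un (ComponentCompl.hom h ⁻¹' C) ⊆ un C := by
  rintro v ⟨c, hc, hv⟩
  exact ⟨_, hc, ComponentCompl.subset_hom c h hv⟩

/-- the map to the tangle space -/
noncomputable def phi (H : ∀ v, ∃ d : G.Dart, d.fst = v) (p : stoneCechRemainder G) : TangleSpace G :=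
  ⟨phiU H p, fun X Y h => by
    rw [← Ultrafilter.coe_inj]
    symm
    rw [Ultrafilter.coe_inj, ← Ultrafilter.coe_le_coe]
    intro C hC
    have : openStar (un (ComponentCompl.hom (Finset.coe_subset.mpr h) ⁻¹' C)) ∈ tr p.1 := hC
    exact (mem_phiU H p X C).2 (mem_of_superset this (openStar_mono (un_hom _ _)))⟩

lemma continuous_phi : Continuous (phi H) := by
  refine continuous_induced_rng.2 (continuous_pi fun X => ?_)
  rw [(ultrafilterBasis_is_basis).continuous_iff]
  rintro _ ⟨C, rfl⟩
  rw [isOpen_iff_mem_nhds]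
  rintro p ⟨t, ht, hts⟩
  have h1 : ∀ᶠ q in 𝓝 p.1, t ∈ 𝓝 q := eventually_mem_nhds_iff.2 ht
  have h2 : ∀ᶠ q : stoneCechRemainder G in 𝓝 p, t ∈ 𝓝 q.1 :=
    continuous_subtype_val.continuousAt.eventually h1
  filter_upwards [h2] with q hq
  exact ⟨t, hq, hts⟩

end Phi

/-- closed subcomplex of a component -/
def sub {X : Set V} (C : G.ComponentCompl X) (v : V) : Set (OneComplex G) :=
  {y | ∃ (d : G.Dart) (t : unitInterval), d.fst = v ∧ (t = 0 ∨ d.snd ∈ C) ∧ y = pt G d t}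

/-- closed subcomplex of a component -/
def subC {X : Set V} (C : G.ComponentCompl X) : Set (OneComplex G) :=
  ⋃ v : {v : (Xᶜ : Set V) // (G.induce Xᶜ).connectedComponentMk v = C}, sub C v.1.1

lemma mem_subC {X : Set V} (C : G.ComponentCompl X) (y : OneComplex G) :
    y ∈ subC C ↔ ∃ (d : G.Dart) (t : unitInterval), d.fst ∈ C ∧ (t = 0 ∨ d.snd ∈ C) ∧
      y = pt G d t := by
  simp only [subC, mem_iUnion, sub]
  constructor
  · rintro ⟨⟨⟨v, hv⟩, h⟩, d, t, rfl, h2, h3⟩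
    exact ⟨d, t, ⟨hv, h⟩, h2, h3⟩
  · rintro ⟨d, t, ⟨hv, h⟩, h2, h3⟩
    exact ⟨⟨⟨d.fst, hv⟩, h⟩, d, t, rfl, h2, h3⟩

lemma precon_sub {X : Set V} (C : G.ComponentCompl X) (v : V) : IsPreconnected (sub C v) := by
  by_cases hne : ∃ d : G.Dart, d.fst = v
  · obtain ⟨d0, hd0⟩ := hne
    apply isPreconnected_of_forall (pt G d0 0)
    rintro y ⟨d, t, h1, h2, rfl⟩
    rcases h2 with rfl | h2
    · refine ⟨{pt G d 0}, ?_, pt_zero _ _ (hd0.trans h1.symm), rfl, isPreconnected_singleton⟩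
      rintro _ rfl
      exact ⟨d, 0, h1, Or.inl rfl, rfl⟩
    · refine ⟨range (pt G d), ?_, ⟨0, pt_zero _ _ (h1.trans hd0.symm)⟩, ⟨t, rfl⟩,
        isPreconnected_range (continuous_pt d)⟩
      rintro _ ⟨s, rfl⟩
      exact ⟨d, s, h1, Or.inr h2, rfl⟩
  · have : sub C v = ∅ := by
      rw [Set.eq_empty_iff_forall_notMem]
      rintro y ⟨d, t, h1, -⟩
      exact hne ⟨d, h1⟩
    rw [this]
    exact isPreconnected_empty

lemma precon_subC {X : Set V} (C : G.ComponentCompl X) :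
    IsPreconnected (subC C) := by
  apply IsPreconnected.iUnion_of_reflTransGen (fun v => precon_sub C _)
  rintro ⟨v, hv⟩ ⟨w, hw⟩
  have hr : (G.induce Xᶜ).Reachable v w := ConnectedComponent.exact (hv.trans hw.symm)
  obtain ⟨p⟩ := hr
  induction p with
  | nil => exact Relation.ReflTransGen.refl
  | @cons a b c h q ih =>
    have hb : (G.induce Xᶜ).connectedComponentMk b = C := by
      rw [← hv]
      exact (ConnectedComponent.sound h.reachable).symm
    refine Relation.ReflTransGen.head ?_ (ih hb hw)
    have hadj : G.Adj a.1 b.1 := h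
    let d : G.Dart := ⟨(a.1, b.1), hadj⟩
    refine ⟨pt G d 1, ⟨d, 1, rfl, Or.inr ⟨b.2, hb⟩, rfl⟩, ⟨d.symm, 0, rfl, Or.inl rfl, ?_⟩⟩
    rw [pt_symm d 1, unitInterval.symm_one]

lemma subC_hom {X Y : Set V} (h : X ⊆ Y) (C : G.ComponentCompl Y) :
    subC C ⊆ subC (C.hom h) := by
  intro y hy
  rw [mem_subC] at *
  obtain ⟨d, t, h1, h2, h3⟩ := hy
  exact ⟨d, t, ComponentCompl.subset_hom C h h1,
    h2.imp_right fun h2 => ComponentCompl.subset_hom C h h2, h3⟩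

lemma star_pt (y : OneComplex G) : ∃ (b : V) (f : OneComplex G → ℝ), Continuous f ∧
    (∀ d t, d.fst ≠ b → d.snd ≠ b → f (pt G d t) = 1) ∧
    (∀ d, d.fst ≠ b → f (pt G d 0) = 1) ∧ f y < 1 := by
  obtain ⟨d, t, rfl⟩ := exists_pt y
  by_cases ht : (t : ℝ) < 1
  · obtain ⟨f, hf, h1, h2, h3⟩ := exists_star (G := G) d.fst
    exact ⟨d.fst, f, hf, h1, h2, by rw [h3 d t rfl]; exact ht⟩
  · obtain ⟨f, hf, h1, h2, h3⟩ := exists_star (G := G) d.snd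
    refine ⟨d.snd, f, hf, h1, h2, ?_⟩
    rw [pt_symm, h3 _ _ rfl, unitInterval.coe_symm_eq]
    linarith

lemma star_pt' (y : OneComplex G) (x : V) (hy : ∀ d : G.Dart, d.fst = x → y ≠ pt G d 0) :
    ∃ (b : V) (f : OneComplex G → ℝ), b ≠ x ∧ Continuous f ∧
    (∀ d t, d.fst ≠ b → d.snd ≠ b → f (pt G d t) = 1) ∧ f y < 1 := by
  obtain ⟨d, t, rfl⟩ := exists_pt y
  by_cases hx : d.fst = x
  · obtain ⟨f, hf, h1, h2, h3⟩ := exists_star (G := G) d.snd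
    refine ⟨d.snd, f, fun h => dart_ne d (hx.trans h.symm), hf, h1, ?_⟩
    rw [pt_symm, h3 _ _ rfl, unitInterval.coe_symm_eq]
    have : t ≠ 0 := by rintro rfl; exact hy d hx rfl
    have := unitInterval.pos_iff_ne_zero.2 this
    have : (0:ℝ) < t := this
    linarith
  · by_cases ht : (t : ℝ) < 1
    · obtain ⟨f, hf, h1, h2, h3⟩ := exists_star (G := G) d.fst
      exact ⟨d.fst, f, hx, hf, h1, by rw [h3 d t rfl]; exact ht⟩
    · have ht1 : t = 1 := by
        apply Subtype.ext
        exact le_antisymm t.2.2 (not_lt.1 ht)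
      subst ht1
      obtain ⟨f, hf, h1, h2, h3⟩ := exists_star (G := G) d.snd
      refine ⟨d.snd, f, ?_, hf, h1, ?_⟩
      · intro h
        apply hy d.symm h
        rw [pt_symm, unitInterval.symm_one]
      · rw [pt_symm, h3 _ _ rfl, unitInterval.coe_symm_eq]
        linarith

/-- nonprincipal ultrafilters -/
abbrev NP (V : Type*) := {u : Ultrafilter V // ∀ v, {v} ∉ u}

lemma compact_NP : CompactSpace (NP V) := by
  apply (isCompact_iff_compactSpace (s := {u : Ultrafilter V | ∀ v, {v} ∉ u})).1
  apply IsClosed.isCompact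
  have : {u : Ultrafilter V | ∀ v, {v} ∉ u} = ⋂ v, {u : Ultrafilter V | {v} ∈ u}ᶜ := by
    ext u; simp
  change IsClosed {u : Ultrafilter V | ∀ v, {v} ∉ u}
  rw [this]
  exact isClosed_iInter fun v => (ultrafilter_isOpen_basic _).isClosed_compl

section Pu

variable (H : ∀ v, ∃ d : G.Dart, d.fst = v)

/-- vertex points -/
noncomputable def vert (v : V) : OneComplex G := pt G (H v).choose 0

lemma vert_eq (v : V) (d : G.Dart) (h : d.fst = v) : vert H v = pt G d 0 :=
  pt_zero _ _ ((H v).choose_spec.trans h.symm)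

/-- limit -/
noncomputable def limV (u : Ultrafilter V) : StoneCech (OneComplex G) :=
  Ultrafilter.extend (fun v => stoneCechUnit (vert H v)) u

lemma tendsto_limV (u : Ultrafilter V) :
    Tendsto (fun v => (stoneCechUnit (vert H v) : StoneCech (OneComplex G))) u
      (𝓝 (limV H u)) :=
  ultrafilter_extend_eq_iff.1 rfl

lemma limV_mem (u : Ultrafilter V) (A : Set V) (hA : A ∈ u) (B : Set (StoneCech (OneComplex G)))
    (hB : ∀ v ∈ A, stoneCechUnit (vert H v) ∈ B) : limV H u ∈ closure B :=
  mem_closure_of_tendsto (tendsto_limV H u) (mem_of_superset hA hB)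

lemma limV_rem (u : NP V) : limV H u.1 ∈ stoneCechRemainder G := by
  rintro ⟨y, hy⟩
  obtain ⟨b, f, hf, h1, h2, h3⟩ := star_pt y
  have : limV H u.1 ∈ closure (stoneCechUnit '' (vert H '' {b}ᶜ)) :=
    limV_mem H u.1 {b}ᶜ (Ultrafilter.compl_mem_iff_notMem.2 (u.2 b)) _
      fun v hv => ⟨_, ⟨v, hv, rfl⟩, rfl⟩
  rw [← hy] at this
  refine sep_closure f hf _ ?_ y h3 this
  rintro _ ⟨v, hv, rfl⟩
  refine h2 _ ?_
  rw [(H v).choose_spec]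
  exact hv

/-- limit as a point of the remainder -/
noncomputable def P (u : NP V) : stoneCechRemainder G := ⟨limV H u.1, limV_rem H u⟩

lemma continuous_P : Continuous (P H) :=
  ((continuous_ultrafilter_extend _).comp continuous_subtype_val).subtype_mk _

lemma mem_of_tr (u : NP V) (M : Set V) (h : openStar M ∈ tr (P H u).1) : M ∈ u.1 := by
  obtain ⟨t, ht, hts⟩ := h
  have := tendsto_limV H u.1 ht
  refine mem_of_superset this ?_
  intro v hv
  have h2 : vert H v ∈ openStar M := hts hv
  rw [vert, mem_openStar, (H v).choose_spec] at h2
  rcases h2 with h2 | h2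
  · exact h2.1
  · exact absurd h2.2 (lt_irrefl _)

lemma glue (E : Set (StoneCech (OneComplex G))) (hE : IsPreconnected E)
    (hE' : E ⊆ stoneCechRemainder G) (p q : stoneCechRemainder G) (hp : p.1 ∈ E) (hq : q.1 ∈ E) :
    (p : ConnectedComponents (stoneCechRemainder G)) = q := by
  have h1 : IsPreconnected (Subtype.val ⁻¹' E : Set (stoneCechRemainder G)) := by
    rw [← IsInducing.subtypeVal.isPreconnected_image, Subtype.image_preimage_coe,
      inter_eq_right.2 hE']
    exact hE
  rw [ConnectedComponents.coe_eq_coe']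
  exact h1.subset_connectedComponent hq hp

lemma dirU (θ : TangleSpace G) (X X' : Finset V) (C : Set (G.ComponentCompl (X : Set V)))
    (C' : Set (G.ComponentCompl (X' : Set V))) (hC : C ∈ θ.1 X) (hC' : C' ∈ θ.1 X') :
    ∃ (Y : Finset V) (D : Set (G.ComponentCompl (Y : Set V))), D ∈ θ.1 Y ∧
      un D ⊆ un C ∧ un D ⊆ un C' ∧ (⋃ c ∈ D, subC c) ⊆ (⋃ c ∈ C, subC c) ∧
      (⋃ c ∈ D, subC c) ⊆ (⋃ c ∈ C', subC c) := by
  classical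
  have e1 : X ⊆ X ∪ X' := Finset.subset_union_left
  have e2 : X' ⊆ X ∪ X' := Finset.subset_union_right
  have h1 : ComponentCompl.hom (Finset.coe_subset.mpr e1) ⁻¹' C ∈ θ.1 (X ∪ X') := by
    rw [← Ultrafilter.mem_map, θ.2 X _ e1]; exact hC
  have h2 : ComponentCompl.hom (Finset.coe_subset.mpr e2) ⁻¹' C' ∈ θ.1 (X ∪ X') := by
    rw [← Ultrafilter.mem_map, θ.2 X' _ e2]; exact hC'
  refine ⟨X ∪ X', _, inter_mem h1 h2, (un_mono inter_subset_left).trans (un_hom _ _),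
    (un_mono inter_subset_right).trans (un_hom _ _), ?_, ?_⟩
  · exact iUnion₂_subset fun c hc => (subC_hom _ c).trans (subset_biUnion_of_mem (u := subC) hc.1)
  · exact iUnion₂_subset fun c hc => (subC_hom _ c).trans (subset_biUnion_of_mem (u := subC) hc.2)

lemma stepB (u u' : NP V) (h : phi H (P H u) = phi H (P H u')) :
    (P H u : ConnectedComponents (stoneCechRemainder G)) = P H u' := by
  classical
  set θ := phi H (P H u) with hθ
  let ι := Σ X : Finset V, {C : Set (G.ComponentCompl (X : Set V)) // C ∈ θ.1 X}
  let A : ι → Set (StoneCech (OneComplex G)) := fun i => ⋃ c ∈ i.2.1, stoneCechUnit '' (subC c)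
  have hA : ∀ i : ι, A i = stoneCechUnit '' (⋃ c ∈ i.2.1, subC c) := fun i => by
    simp only [A, image_iUnion]
  have : Nonempty ι := ⟨⟨∅, univ, univ_mem⟩⟩
  have hpre : IsPreconnected (⋂ i, closure (A i)) := by
    apply precon_iInter
    · rintro ⟨X, C, hC⟩ ⟨X', C', hC'⟩
      obtain ⟨Y, D, hD, -, -, h1, h2⟩ := dirU θ X X' C C' hC hC'
      refine ⟨⟨Y, D, hD⟩, ?_, ?_⟩
      · rw [hA, hA]; exact image_mono h1
      · rw [hA, hA]; exact image_mono h2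
    · rintro ⟨X, C, hC⟩ a b ha hb hab hc
      obtain ⟨D, hD, hD'⟩ := ultra_split (θ.1 X) (fun c => stoneCechUnit '' (subC c))
        (fun c => (precon_subC c).image _ continuous_stoneCechUnit.continuousOn)
        C hC a b ha hb hab hc
      exact ⟨⟨X, D, hD⟩, hD'⟩
  have key : ∀ v : NP V, θ = phi H (P H v) → (P H v).1 ∈ ⋂ i, closure (A i) := by
    intro v hv
    rw [mem_iInter]
    rintro ⟨X, C, hC⟩
    rw [hv] at hC
    have h1 := mem_of_tr H v _ hC
    refine limV_mem H v.1 _ h1 _ ?_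
    rintro x ⟨c, hc, hx⟩
    rw [hA]
    refine ⟨_, mem_biUnion hc ((mem_subC _ _).2 ⟨(H x).choose, 0, ?_, Or.inl rfl, rfl⟩), rfl⟩
    rw [(H x).choose_spec]; exact hx
  refine glue _ hpre ?_ _ _ (key u rfl) (key u' h)
  rintro z hz ⟨y, rfl⟩
  obtain ⟨b, f, hf, h1, h2, h3⟩ := star_pt y
  have := mem_iInter.1 hz ⟨{b}, univ, univ_mem⟩
  rw [hA] at this
  refine sep_closure f hf _ ?_ y h3 this
  intro z hz
  obtain ⟨c, -, hz⟩ := mem_iUnion₂.1 hz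
  obtain ⟨d, t, h4, h5, rfl⟩ := (mem_subC _ _).1 hz
  have hcb : ∀ v ∈ c, v ≠ b := by
    intro v hv e
    exact ComponentCompl.notMem_of_mem hv (by simp [e])
  rcases h5 with rfl | h5
  · exact h2 _ (hcb _ h4)
  · exact h1 _ _ (hcb _ h4) (hcb _ h5)

lemma surj (θ : TangleSpace G) : ∃ u : NP V, phi H (P H u) = θ := by
  classical
  let F : Filter V :=
    { sets := {A | ∃ (X : Finset V) (C : Set (G.ComponentCompl (X : Set V))),
        C ∈ θ.1 X ∧ un C ⊆ A}
      univ_sets := ⟨∅, univ, univ_mem, subset_univ _⟩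
      sets_of_superset := by
        rintro A B ⟨X, C, hC, h⟩ hAB
        exact ⟨X, C, hC, h.trans hAB⟩
      inter_sets := by
        rintro A B ⟨X, C, hC, h⟩ ⟨X', C', hC', h'⟩
        obtain ⟨Y, D, hD, h1, h2, -, -⟩ := dirU θ X X' C C' hC hC'
        exact ⟨Y, D, hD, subset_inter (h1.trans h) (h2.trans h')⟩ }
  have hF : ∀ (X : Finset V) (C : Set (G.ComponentCompl (X : Set V))), C ∈ θ.1 X → un C ∈ F :=
    fun X C hC => ⟨X, C, hC, Subset.rfl⟩
  have : F.NeBot := by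
    rw [neBot_iff, Ne, ← empty_mem_iff_bot]
    rintro ⟨X, C, hC, h⟩
    obtain ⟨c, hc⟩ := (θ.1 X).nonempty_of_mem hC
    obtain ⟨v, hv⟩ := c.nonempty
    exact h ⟨c, hc, hv⟩
  have hle : ∀ A ∈ F, A ∈ Ultrafilter.of F := fun A hA => Ultrafilter.of_le F hA
  have hNP : ∀ v, {v} ∉ Ultrafilter.of F := by
    intro b hb
    have h1 := hle _ (hF {b} univ univ_mem)
    obtain ⟨v, hv, hv'⟩ := (Ultrafilter.of F).nonempty_of_mem (inter_mem hb h1)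
    rw [un_univ] at hv'
    exact hv' (by simpa using hv)
  refine ⟨⟨Ultrafilter.of F, hNP⟩, ?_⟩
  apply Subtype.ext
  funext X
  rw [← Ultrafilter.coe_le_coe]
  intro C hC
  by_contra hn
  have h1 : Cᶜ ∈ phiU H (P H ⟨Ultrafilter.of F, hNP⟩) X := Ultrafilter.compl_mem_iff_notMem.2 hn
  have h2 := mem_of_tr H _ _ h1
  have h3 := hle _ (hF X C hC)
  obtain ⟨v, hv, hv'⟩ := (Ultrafilter.of F).nonempty_of_mem (inter_mem h2 h3)
  exact un_disj hv' hv

lemma stepA_core (p : stoneCechRemainder G) (W : Ultrafilter (G.Dart × unitInterval))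
    (hW : Tendsto (fun q : G.Dart × unitInterval =>
      (stoneCechUnit (pt G q.1 q.2) : StoneCech (OneComplex G))) W (𝓝 p.1))
    (ε : G.Dart → unitInterval) (hε : {q : G.Dart × unitInterval | ε q.1 ≤ q.2} ∈ W)
    (hav : ∀ y, ∃ D ∈ W.map Prod.fst, ∃ f : OneComplex G → ℝ, Continuous f ∧ f y < 1 ∧
      ∀ d ∈ D, ∀ t, ε d ≤ t → f (pt G d t) = 1)
    (u : NP V) (hu : u.1 = W.map (fun q => q.1.snd)) :
    (p : ConnectedComponents (stoneCechRemainder G)) = P H u := by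
  let S : G.Dart → Set (StoneCech (OneComplex G)) :=
    fun d => (fun t => stoneCechUnit (pt G d t)) '' Ici (ε d)
  have hS : ∀ d, IsPreconnected (S d) := fun d =>
    isPreconnected_Ici.image _ (continuous_stoneCechUnit.comp (continuous_pt d)).continuousOn
  refine glue _ (precon_ultra (W.map Prod.fst) S hS) ?_ p (P H u) ?_ ?_
  · rintro z hz ⟨y, rfl⟩
    obtain ⟨D, hD, f, hf, hy, hf1⟩ := hav y
    have h1 := mem_iInter.1 hz ⟨D, hD⟩
    refine sep_closure f hf {z | ∃ d ∈ D, ∃ t, ε d ≤ t ∧ z = pt G d t} ?_ y hy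
      (closure_mono ?_ h1)
    · rintro _ ⟨d, hd, t, ht, rfl⟩
      exact hf1 d hd t ht
    · apply iUnion₂_subset
      rintro d hd _ ⟨t, ht, rfl⟩
      exact ⟨_, ⟨d, hd, t, ht, rfl⟩, rfl⟩
  · rw [mem_iInter]
    rintro ⟨D, hD⟩
    have hD' : Prod.fst ⁻¹' D ∈ W := hD
    refine mem_closure_of_tendsto hW ?_
    filter_upwards [hD', hε] with q h1 h2
    exact mem_biUnion h1 ⟨q.2, h2, rfl⟩
  · rw [mem_iInter]
    rintro ⟨D, hD⟩
    have hD' : Prod.fst ⁻¹' D ∈ W := hD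
    refine limV_mem H u.1 {v | ∃ d ∈ D, d.snd = v} ?_ _ ?_
    · rw [hu, Ultrafilter.mem_map]
      exact mem_of_superset hD' fun q hq => ⟨q.1, hq, rfl⟩
    · rintro v ⟨d, hd, rfl⟩
      refine mem_biUnion hd ⟨1, unitInterval.le_one', ?_⟩
      simp only
      rw [vert_eq H d.snd d.symm rfl, pt_symm d 1, unitInterval.symm_one]

lemma stepA_two (p : stoneCechRemainder G) (W : Ultrafilter (G.Dart × unitInterval))
    (hW : Tendsto (fun q : G.Dart × unitInterval =>
      (stoneCechUnit (pt G q.1 q.2) : StoneCech (OneComplex G))) W (𝓝 p.1))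
    (hu : ∀ v, {v} ∉ W.map (fun q => q.1.snd)) :
    ∃ u : NP V, (p : ConnectedComponents (stoneCechRemainder G)) = P H u := by
  classical
  refine ⟨⟨_, hu⟩, ?_⟩
  have hu' : ∀ b, {q : G.Dart × unitInterval | q.1.snd ≠ b} ∈ W := fun b =>
    Ultrafilter.compl_mem_iff_notMem.2 (hu b)
  by_cases hx : ∃ x, {x} ∈ W.map (fun q => q.1.fst)
  · obtain ⟨x, hx⟩ := hx
    have hx' : {q : G.Dart × unitInterval | q.1.fst = x} ∈ W := hx
    obtain ⟨dx, hdx⟩ := H x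
    obtain ⟨h, hc, h0, h1, h2⟩ := exists_h {pt G dx 0} isCompact_singleton p.1 p.2
    have hex : ∀ d : G.Dart, ∃ e : unitInterval, 0 < (e : ℝ) ∧
        (d.fst = x → ∀ t < e, h (stoneCechUnit (pt G d t)) < 1 / 2) := by
      intro d
      by_cases hd : d.fst = x
      · have hcont : Continuous fun t => h (stoneCechUnit (pt G d t)) :=
          hc.comp (continuous_stoneCechUnit.comp (continuous_pt d))
        have hz : h (stoneCechUnit (pt G d 0)) = 0 := by
          rw [pt_zero d dx (hd.trans hdx.symm)]
          exact h0 _ rfl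
        have hev : ∀ᶠ t in 𝓝 (0 : unitInterval), h (stoneCechUnit (pt G d t)) < 1 / 2 :=
          hcont.continuousAt.eventually_lt continuousAt_const (by rw [hz]; norm_num)
        obtain ⟨e, he, he'⟩ := (nhds_bot_basis (α := unitInterval)).eventually_iff.1 hev
        exact ⟨e, he, fun _ t ht => he' ht⟩
      · exact ⟨1, by simp, fun h => absurd h hd⟩
    choose ε hε0 hε using hex
    apply stepA_core H p W hW ε ?_ ?_ _ rfl
    · have hev : ∀ᶠ z in 𝓝 p.1, 1 / 2 < h z :=
        continuousAt_const.eventually_lt hc.continuousAt (by rw [h1]; norm_num)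
      filter_upwards [hx', hW.eventually hev] with q hq1 hq2
      by_contra hlt
      have := hε q.1 hq1 q.2 (not_le.1 hlt)
      linarith
    · intro y
      by_cases hy : ∃ d : G.Dart, d.fst = x ∧ y = pt G d 0
      · obtain ⟨d, hd, rfl⟩ := hy
        obtain ⟨f, hf, hfv⟩ := exists_bump (G := G) x (fun d => (ε d : ℝ)) hε0 (fun d => (ε d).2.2)
        refine ⟨{d | d.fst = x}, hx', f, hf, ?_, ?_⟩
        · rw [hfv]; simp [bump0, hd]
        · intro d' hd' t ht
          rw [hfv]
          have : d'.fst = x := hd'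
          simp only [bump0, this, if_true]
          rw [min_eq_left]
          rw [one_le_div (hε0 _)]
          exact ht
      · push Not at hy
        obtain ⟨b, f, hbx, hf, hf1, hfy⟩ := star_pt' y x hy
        refine ⟨{d | d.fst = x ∧ d.snd ≠ b}, inter_mem hx' (hu' b), f, hf, hfy, ?_⟩
        rintro d ⟨hd1, hd2⟩ t -
        exact hf1 d t (fun h => hbx (h.symm.trans hd1)) hd2
  · push Not at hx
    have hx' : ∀ b, {q : G.Dart × unitInterval | q.1.fst ≠ b} ∈ W := fun b =>
      Ultrafilter.compl_mem_iff_notMem.2 (hx b)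
    apply stepA_core H p W hW (fun _ => 0) ?_ ?_ _ rfl
    · exact mem_of_superset univ_mem fun q _ => unitInterval.nonneg'
    · intro y
      obtain ⟨b, f, hf, hf1, -, hfy⟩ := star_pt y
      refine ⟨{d | d.fst ≠ b ∧ d.snd ≠ b}, inter_mem (hx' b) (hu' b), f, hf, hfy, ?_⟩
      rintro d ⟨hd1, hd2⟩ t -
      exact hf1 d t hd1 hd2

lemma stepA (p : stoneCechRemainder G) :
    ∃ u : NP V, (p : ConnectedComponents (stoneCechRemainder G)) = P H u := by
  classical
  have hsurj : Function.Surjective (fun q : G.Dart × unitInterval => pt G q.1 q.2) := by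
    intro y
    obtain ⟨d, t, rfl⟩ := exists_pt y
    exact ⟨(d, t), rfl⟩
  have hne : (comap (fun q : G.Dart × unitInterval => pt G q.1 q.2) (tr p.1)).NeBot :=
    NeBot.comap_of_surj inferInstance hsurj
  let W := Ultrafilter.of (comap (fun q : G.Dart × unitInterval => pt G q.1 q.2) (tr p.1))
  have hW0 : Tendsto (fun q : G.Dart × unitInterval => pt G q.1 q.2) W (tr p.1) :=
    tendsto_iff_comap.2 (Ultrafilter.of_le _)
  have htr : Tendsto (stoneCechUnit : OneComplex G → _) (tr p.1) (𝓝 p.1) := tendsto_comap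
  have hW : Tendsto (fun q : G.Dart × unitInterval =>
      (stoneCechUnit (pt G q.1 q.2) : StoneCech (OneComplex G))) W (𝓝 p.1) := htr.comp hW0
  by_cases hu : ∃ v, {v} ∈ W.map (fun q => q.1.snd)
  · obtain ⟨y, hy⟩ := hu
    have hy' : {q : G.Dart × unitInterval | q.1.snd = y} ∈ W := hy
    let σ : G.Dart × unitInterval → G.Dart × unitInterval :=
      fun q => (q.1.symm, unitInterval.symm q.2)
    have hσ : Tendsto (fun q : G.Dart × unitInterval =>
        (stoneCechUnit (pt G q.1 q.2) : StoneCech (OneComplex G))) (W.map σ) (𝓝 p.1) := by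
      rw [Ultrafilter.coe_map, tendsto_map'_iff]
      refine hW.congr fun q => ?_
      simp only [Function.comp, σ]
      rw [← pt_symm]
    refine stepA_two H p (W.map σ) hσ ?_
    intro x hx
    have hx' : {q : G.Dart × unitInterval | q.1.fst = x} ∈ W := hx
    have hxy := inter_mem hx' hy'
    obtain ⟨q, hq1, hq2⟩ := W.nonempty_of_mem hxy
    have hcm := hW0 (compl_mem_tr _ (edge_compact q.1) p.1 p.2)
    obtain ⟨r, ⟨hr1, hr2⟩, hr3⟩ := W.nonempty_of_mem (inter_mem hxy hcm)
    have : r.1 = q.1 := by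
      apply Dart.ext
      exact Prod.ext (Eq.trans hr1 hq1.symm) (Eq.trans hr2 hq2.symm)
    apply hr3
    exact ⟨r.2, by rw [← this]⟩
  · push Not at hu
    exact stepA_two H p W hW hu

end Pu

end Graph

end TangleProof

/-- Theorem 1 / Theorem 5.23: the tangle space of `G` is homeomorphic to the quotient of the
Stone-Čech remainder of the 1-complex `|G|` obtained by collapsing each connected component
to a single point. -/
theorem tangleSpace_homeo_connectedComponents_remainder
    [Infinite V] (hG : G.Connected) :
    Nonempty (TangleSpace G ≃ₜ ConnectedComponents (stoneCechRemainder G)) := by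
  classical
  have H : ∀ v, ∃ d : G.Dart, d.fst = v := by
    intro v
    obtain ⟨w, hw⟩ := hG.preconnected.exists_adj_of_nontrivial v
    exact ⟨⟨(v, w), hw⟩, rfl⟩
  have hT2 : T2Space (TangleSpace G) :=
    inferInstanceAs (T2Space {U : ∀ X : Finset V, Ultrafilter (G.ComponentCompl (X : Set V)) //
      ∀ (X Y : Finset V) (h : X ⊆ Y),
      (U Y).map (ComponentCompl.hom (Finset.coe_subset.mpr h)) = U X})
  have hTD : TotallyDisconnectedSpace (TangleSpace G) :=
    inferInstanceAs (TotallyDisconnectedSpace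
      {U : ∀ X : Finset V, Ultrafilter (G.ComponentCompl (X : Set V)) //
      ∀ (X Y : Finset V) (h : X ⊆ Y),
      (U Y).map (ComponentCompl.hom (Finset.coe_subset.mpr h)) = U X})
  have hNP : CompactSpace (TangleProof.NP V) := TangleProof.compact_NP
  have hsurj : Function.Surjective (fun u : TangleProof.NP V =>
      (TangleProof.P H u : ConnectedComponents (stoneCechRemainder G))) := by
    intro c
    obtain ⟨p, rfl⟩ := ConnectedComponents.surjective_coe c
    obtain ⟨u, hu⟩ := TangleProof.stepA H p
    exact ⟨u, hu.symm⟩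
  have hcs : CompactSpace (ConnectedComponents (stoneCechRemainder G)) :=
    hsurj.compactSpace (ConnectedComponents.continuous_coe.comp (TangleProof.continuous_P H))
  have hphi := TangleProof.continuous_phi H
  have hL : Continuous hphi.connectedComponentsLift := hphi.connectedComponentsLift_continuous
  have hbij : Function.Bijective hphi.connectedComponentsLift := by
    constructor
    · intro a b hab
      obtain ⟨u, rfl⟩ := hsurj a
      obtain ⟨u', rfl⟩ := hsurj b
      simp only [Continuous.connectedComponentsLift_apply_coe] at hab
      exact TangleProof.stepB H u u' hab
    · intro θ
      obtain ⟨u, hu⟩ := TangleProof.surj H θ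
      exact ⟨(TangleProof.P H u : ConnectedComponents (stoneCechRemainder G)), by
        rw [Continuous.connectedComponentsLift_apply_coe]; exact hu⟩
  exact ⟨(Continuous.homeoOfEquivCompactToT2 (f := Equiv.ofBijective _ hbij) hL).symm⟩
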